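/- For every real x ≥ 0, the function t ↦ g(t,x) is represented on the interval (0,2) by its Taylor series centered at t₀ = 1: for every t ∈ (0,2), the series ∑_{n=0}^{∞} (g^{(n)}(1,x)/n!)·(t−1)^n converges and its sum equals g(t,x). -/

import Mathlib

/-- `g(t,x) = x · t^{-3/2} · exp(-x²/t)`. -/
noncomputable def g (t x : ℝ) : ℝ := x * t ^ (-(3 / 2) : ℝ) * Real.exp (-x ^ 2 / t)

/-! For fixed `x`, the function `t ↦ g t x` is the restriction to the positive reals of a function
holomorphic on the slit plane. The disc of radius `c` about a point `c > 0` lies in the slit plane,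
so the complex Taylor series at `c` converges there, and its real part on the real axis is the real
Taylor series because the complex and real derivatives are compatible. -/

open Filter Metric Topology

theorem iteratedDeriv_re_comp_ofReal {f : ℂ → ℂ} {s : ℝ} (hf : AnalyticAt ℂ f s) (n : ℕ) :
    iteratedDeriv n (fun y : ℝ => (f y).re) s = (iteratedDeriv n f s).re := by
  induction n generalizing s with
  | zero => simp only [iteratedDeriv_zero]
  | succ n ih =>
    have hfn : DifferentiableAt ℂ (iteratedDeriv n f) s := by
      simpa only [iteratedDeriv_eq_iterate] using (hf.iterated_deriv n).differentiableAt
    have heq : iteratedDeriv n (fun y : ℝ => (f y).re) =ᶠ[𝓝 s]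
        fun y => (iteratedDeriv n f y).re :=
      (Complex.continuous_ofReal.continuousAt.eventually hf.eventually_analyticAt).mono
        fun _ hy => ih hy
    rw [iteratedDeriv_succ, iteratedDeriv_succ, heq.deriv_eq, hfn.hasDerivAt.real_of_complex.deriv]

theorem hasSum_taylorSeries_re_on_ball {f : ℂ → ℂ} {c r t : ℝ}
    (hf : DifferentiableOn ℂ f (ball (c : ℂ) r)) (ht : t ∈ ball c r) :
    HasSum
      (fun n : ℕ => iteratedDeriv n (fun s : ℝ => (f s).re) c / (n.factorial : ℝ) * (t - c) ^ n)
      (f t).re := by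
  have htc : (t : ℂ) ∈ ball (c : ℂ) r := by
    rwa [mem_ball, Complex.isometry_ofReal.dist_eq]
  have hfc : AnalyticAt ℂ f c :=
    hf.analyticAt (ball_mem_nhds _ (pos_of_mem_ball ht))
  refine (Complex.hasSum_re (Complex.hasSum_taylorSeries_on_ball hf htc)).congr_fun fun n => ?_
  calc iteratedDeriv n (fun s : ℝ => (f s).re) c / (n.factorial : ℝ) * (t - c) ^ n
      = (n.factorial : ℝ)⁻¹ * (t - c) ^ n * (iteratedDeriv n f c).re := by
        rw [iteratedDeriv_re_comp_ofReal hfc]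
        ring
    _ = ((n.factorial : ℂ)⁻¹ • ((t : ℂ) - c) ^ n • iteratedDeriv n f c).re := by
        rw [← Complex.re_ofReal_mul]
        push_cast
        simp only [smul_eq_mul, mul_assoc]

theorem ball_ofReal_self_subset_slitPlane (c : ℝ) : ball (c : ℂ) c ⊆ Complex.slitPlane := by
  intro z hz
  have hre : |z.re - c| < c := by
    simpa using (Complex.abs_re_le_norm (z - c)).trans_lt (mem_ball_iff_norm.mp hz)
  exact Or.inl (by linarith [(abs_lt.mp hre).1])

/-- The complexification of `t ↦ g t x`, with the principal branch of the power; it is holomorphic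
on the slit plane. -/
noncomputable def gComplex (x : ℝ) (z : ℂ) : ℂ :=
  x * z ^ (-(3 / 2) : ℂ) * Complex.exp (-(x : ℂ) ^ 2 / z)

theorem differentiableOn_gComplex (x : ℝ) :
    DifferentiableOn ℂ (gComplex x) Complex.slitPlane := by
  intro z hz
  have hpow : DifferentiableAt ℂ (fun w : ℂ => w ^ (-(3 / 2) : ℂ)) z :=
    differentiableAt_id.cpow_const hz
  have hexp : DifferentiableAt ℂ (fun w : ℂ => Complex.exp (-(x : ℂ) ^ 2 / w)) z :=
    ((differentiableAt_const _).div differentiableAt_id (Complex.slitPlane_ne_zero hz)).cexp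
  exact ((hpow.const_mul (x : ℂ)).mul hexp).differentiableWithinAt

theorem gComplex_ofReal (x : ℝ) {t : ℝ} (ht : 0 ≤ t) : gComplex x t = g t x := by
  simp only [gComplex, g, Complex.ofReal_mul, Complex.ofReal_cpow ht, Complex.ofReal_exp]
  norm_num

theorem stmt_5_general (x : ℝ) {c t : ℝ} (ht : t ∈ Set.Ioo 0 (2 * c)) :
    HasSum
      (fun n : ℕ => iteratedDeriv n (fun s => g s x) c / (n.factorial : ℝ) * (t - c) ^ n)
      (g t x) := by
  obtain ⟨ht₀, ht₂⟩ := ht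
  have hc : 0 < c := by linarith
  have htc : t ∈ ball c c := by
    rw [Real.ball_eq_Ioo]
    constructor <;> linarith
  have hre : ∀ s : ℝ, 0 ≤ s → g s x = (gComplex x s).re := fun s hs => by
    rw [gComplex_ofReal x hs, Complex.ofReal_re]
  have hgerm : (fun s => g s x) =ᶠ[𝓝 c] fun s : ℝ => (gComplex x s).re :=
    (eventually_ge_nhds hc).mono hre
  simpa only [hre t ht₀.le, hgerm.iteratedDeriv_eq] using hasSum_taylorSeries_re_on_ball
    ((differentiableOn_gComplex x).mono (ball_ofReal_self_subset_slitPlane c)) htc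

/-- For every `x ≥ 0` and every `t ∈ (0,2)`, the Taylor series of `t ↦ g(t,x)` centered
at `t₀ = 1` converges and its sum equals `g(t,x)`. -/
theorem stmt_5 (x : ℝ) (hx : 0 ≤ x) (t : ℝ) (ht : t ∈ Set.Ioo (0 : ℝ) 2) :
    HasSum
      (fun n : ℕ => iteratedDeriv n (fun s => g s x) 1 / (n.factorial : ℝ) * (t - 1) ^ n)
      (g t x) :=
  stmt_5_general x (by simpa only [mul_one] using ht)
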